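/- If an agent i rejects a packing X by proposing (X \ X_rej) ∪ X_int, then i also rejects X using the canonical rejection set X'_rej = {A ∈ X : A intersects some set of X_int}, i.e., (X \ X'_rej) ∪ X_int is pairwise disjoint and covers at least as many elements of U_i as (X \ X_rej) ∪ X_int does, hence strictly more than X. -/

import Mathlib

open Finset

variable {α : Type*} [DecidableEq α] {ι : Type*} [Fintype ι] [DecidableEq ι]

/-- A collection of finsets is pairwise disjoint. -/
def PairwiseDisj (X : Finset (Finset α)) : Prop :=
  (X : Set (Finset α)).PairwiseDisjoint id

/-- Number of elements of `Ui` covered by the packing `X`. -/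
def covOf (Ui : Finset α) (X : Finset (Finset α)) : ℕ :=
  ((X.biUnion id) ∩ Ui).card

/-- `Hs` is a hitting set of the set system `S`. -/
def IsHitting (S : Finset (Finset α)) (Hs : Finset α) : Prop :=
  ∀ A ∈ S, (A ∩ Hs).Nonempty

/-- `F` is a sunflower with core `Y`: pairwise intersections all equal `Y`,
and all petals are nonempty. -/
def IsSunflower (F : Finset (Finset α)) (Y : Finset α) : Prop :=
  (∀ A ∈ F, ∀ B ∈ F, A ≠ B → A ∩ B = Y) ∧ ∀ A ∈ F, (A \ Y).Nonempty

/-- Agent `i` rejects the packing `X` (with respect to the collection `S` and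
partition `U`): it can remove a subfamily `Xrej` and add `i`-internal sets `Xint`
from `S` so that the result is pairwise disjoint and covers strictly more of `U i`. -/
def Rejects (U : ι → Finset α) (S : Finset (Finset α)) (i : ι)
    (X : Finset (Finset α)) : Prop :=
  ∃ Xrej ⊆ X, ∃ Xint : Finset (Finset α),
    (∀ A ∈ Xint, A ∈ S ∧ A ⊆ U i) ∧
    PairwiseDisj ((X \ Xrej) ∪ Xint) ∧
    covOf (U i) X < covOf (U i) ((X \ Xrej) ∪ Xint)

/-- A packing is rejection-proof if no agent rejects it. -/
def RejectionProof (U : ι → Finset α) (S : Finset (Finset α))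
    (X : Finset (Finset α)) : Prop :=
  ∀ i, ¬ Rejects U S i X

/-- Canonical rejections: if agent i rejects X via (X \ Xrej) ∪ Xint, then the
canonical rejection set (sets of X meeting Xint) also witnesses a rejection, with
at least as much coverage of U i. -/
theorem stmt14 {α : Type*} [DecidableEq α] {ι : Type*} [DecidableEq ι]
    (U : ι → Finset α) (hU : ∀ i j : ι, i ≠ j → Disjoint (U i) (U j))
    (S : Finset (Finset α)) (i : ι)
    (X : Finset (Finset α)) (hXS : X ⊆ S) (hdisj : PairwiseDisj X)
    (Xrej : Finset (Finset α)) (hrej : Xrej ⊆ X)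
    (Xint : Finset (Finset α)) (hint : ∀ A ∈ Xint, A ∈ S ∧ A ⊆ U i)
    (halt : PairwiseDisj ((X \ Xrej) ∪ Xint))
    (hgain : covOf (U i) X < covOf (U i) ((X \ Xrej) ∪ Xint)) :
    PairwiseDisj ((X \ X.filter (fun A => ∃ B ∈ Xint, ¬ Disjoint A B)) ∪ Xint) ∧
    covOf (U i) ((X \ Xrej) ∪ Xint) ≤
      covOf (U i) ((X \ X.filter (fun A => ∃ B ∈ Xint, ¬ Disjoint A B)) ∪ Xint) ∧
    covOf (U i) X <
      covOf (U i) ((X \ X.filter (fun A => ∃ B ∈ Xint, ¬ Disjoint A B)) ∪ Xint) := by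
  have hsub : (X \ Xrej) ∪ Xint ⊆
      (X \ X.filter (fun A => ∃ B ∈ Xint, ¬ Disjoint A B)) ∪ Xint := by
    intro A hA
    by_cases hAi : A ∈ Xint
    · exact mem_union_right _ hAi
    · have hAX : A ∈ X \ Xrej := (mem_union.1 hA).resolve_right hAi
      refine mem_union_left _ (mem_sdiff.2 ⟨(mem_sdiff.1 hAX).1, fun hf => ?_⟩)
      obtain ⟨B, hB, hAB⟩ := (mem_filter.1 hf).2
      refine hAB (halt (mem_coe.2 hA) (mem_coe.2 (mem_union_right _ hB)) ?_)
      rintro rfl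
      exact hAi hB
  have hle : covOf (U i) ((X \ Xrej) ∪ Xint) ≤
      covOf (U i) ((X \ X.filter (fun A => ∃ B ∈ Xint, ¬ Disjoint A B)) ∪ Xint) :=
    card_le_card (inter_subset_inter_right (biUnion_subset_biUnion_of_subset_left _ hsub))
  have key : ∀ A ∈ X \ X.filter (fun A => ∃ B ∈ Xint, ¬ Disjoint A B),
      ∀ B ∈ Xint, Disjoint A B := by
    intro A hA B hB
    by_contra h
    obtain ⟨h1, h2⟩ := mem_sdiff.1 hA
    exact h2 (mem_filter.2 ⟨h1, B, hB, h⟩)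
  refine ⟨?_, hle, lt_of_lt_of_le hgain hle⟩
  intro A hA B hB hne
  rcases mem_union.1 (mem_coe.1 hA) with hA | hA <;>
    rcases mem_union.1 (mem_coe.1 hB) with hB | hB
  · exact hdisj (mem_coe.2 (mem_sdiff.1 hA).1) (mem_coe.2 (mem_sdiff.1 hB).1) hne
  · exact key A hA B hB
  · exact (key B hB A hA).symm
  · exact halt (mem_coe.2 (mem_union_right _ hA)) (mem_coe.2 (mem_union_right _ hB)) hne
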